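/- arXiv:quant-ph/0410052 — 2 statements merged into one kernel-verified Lean document; each statement's English description precedes it below -/
import Mathlib

section
/- Let $\lambda \in \mathbb{R}^6$ and $\tilde{\lambda} \in \mathbb{R}^3$ be nonincreasing vectors. There exists a Hermitian matrix $\rho_{AB}$ on $\mathbb{C}^3 \otimes \mathbb{C}^2$ with spectrum $\lambda$ such that $\rho_A = \mathrm{Tr}_B(\rho_{AB})$ has spectrum $\tilde{\lambda}$ if and only if the following hold: the trace condition $\tilde{\lambda}_1 + \tilde{\lambda}_2 + \tilde{\lambda}_3 = \lambda_1 + \lambda_2 + \lambda_3 + \lambda_4 + \lambda_5 + \lambda_6$, together with the four inequalities $\tilde{\lambda}_1 \leq \lambda_1 + \lambda_2$, $\tilde{\lambda}_3 \geq \lambda_5 + \lambda_6$, $\tilde{\lambda}_3 \leq \lambda_2 + \lambda_3$, and $\tilde{\lambda}_1 \geq \lambda_4 + \lambda_5$. -/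
open Matrix Polynomial

/-- `lam` is the vector of eigenvalues of `M` listed with multiplicity:
the characteristic polynomial of `M` is `∏ i (X - lam i)`. -/
def HasSpectrum {m : Type*} [Fintype m] [DecidableEq m] {N : ℕ}
    (M : Matrix m m ℂ) (lam : Fin N → ℝ) : Prop :=
  M.charpoly = ∏ i, (X - C (lam i : ℂ))

/-- The partial trace over the second factor:
`(Tr_B ρ)^{ik} = ∑_j ρ^{ij,kj}`. -/
noncomputable def partialTraceB {dA dB : ℕ}
    (ρ : Matrix (Fin dA × Fin dB) (Fin dA × Fin dB) ℂ) : Matrix (Fin dA) (Fin dA) ℂ :=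
  fun i k => ∑ j : Fin dB, ρ (i, j) (k, j)

theorem equiv_of_map_eq {α β : Type*} [Fintype α] [Fintype β] (f : α → ℂ) (g : β → ℂ)
    (h : Multiset.map f Finset.univ.val = Multiset.map g Finset.univ.val) :
    ∃ e : α ≃ β, ∀ a, g (e a) = f a := by
  classical
  have hc : ∀ c, Nonempty ({a // f a = c} ≃ {b // g b = c}) := by
    intro c
    refine ⟨Fintype.equivOfCardEq ?_⟩
    have := congrArg (Multiset.count c) h
    rw [Multiset.count_map, Multiset.count_map] at this
    rw [Fintype.card_subtype, Fintype.card_subtype]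
    simpa [Finset.card, Finset.filter, eq_comm] using this
  exact ⟨Equiv.ofFiberEquiv fun c => (hc c).some, fun a => Equiv.ofFiberEquiv_map _ a⟩

theorem exists_basis {n : Type*} [Fintype n] [DecidableEq n] {N : ℕ} (M : Matrix n n ℂ)
    (hM : M.IsHermitian) (lam : Fin N → ℝ) (h : HasSpectrum M lam) :
    ∃ b : OrthonormalBasis (Fin N) ℂ (EuclideanSpace ℂ n),
      ∀ i, toEuclideanLin M (b i) = (lam i : ℂ) • b i := by
  have h1 := hM.roots_charpoly_eq_eigenvalues
  rw [h, Polynomial.roots_prod _ _ (Finset.prod_ne_zero_iff.2 fun i _ => X_sub_C_ne_zero _)] at h1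
  simp only [roots_X_sub_C, Multiset.bind_singleton] at h1
  obtain ⟨e, he⟩ := equiv_of_map_eq _ _ h1
  refine ⟨hM.eigenvectorBasis.reindex e.symm, fun i => ?_⟩
  have h2 := hM.mulVec_eigenvectorBasis (e i)
  have h3 : hM.eigenvalues (e i) = lam i := by
    have := he i
    simpa using this
  rw [h3] at h2
  ext k
  have h4 := congrFun h2 k
  simpa [toLpLin_apply] using h4

theorem quad_form {n : Type*} [Fintype n] [DecidableEq n] {N : ℕ} (M : Matrix n n ℂ)
    (hM : M.IsHermitian) (lam : Fin N → ℝ)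
    (b : OrthonormalBasis (Fin N) ℂ (EuclideanSpace ℂ n))
    (hb : ∀ i, toEuclideanLin M (b i) = (lam i : ℂ) • b i) (f : EuclideanSpace ℂ n) :
    inner ℂ f (toEuclideanLin M f) = ((∑ i, lam i * ‖inner ℂ (b i) f‖ ^ 2 : ℝ) : ℂ) := by
  rw [← b.sum_inner_mul_inner]
  push_cast
  refine Finset.sum_congr rfl fun i _ => ?_
  have hs := isSymmetric_toEuclideanLin_iff.mpr hM (b i) f
  rw [← hs, hb, inner_smul_left, ← inner_conj_symm f (b i), Complex.conj_ofReal,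
    ← Complex.conj_mul']
  ring

/-- `v ⊗ e_j`. -/
noncomputable def tens (v : EuclideanSpace ℂ (Fin 3)) (j : Fin 2) :
    EuclideanSpace ℂ (Fin 3 × Fin 2) :=
  WithLp.toLp 2 fun p => if p.2 = j then v p.1 else 0

theorem inner_tens (v w : EuclideanSpace ℂ (Fin 3)) (j k : Fin 2) :
    inner ℂ (tens v j) (tens w k) = if j = k then inner ℂ v w else 0 := by
  fin_cases j <;> fin_cases k <;>
    simp [tens, PiLp.inner_apply, Fintype.sum_prod_type]

theorem inner_tens_left (v : EuclideanSpace ℂ (Fin 3)) (j : Fin 2)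
    (φ : EuclideanSpace ℂ (Fin 3 × Fin 2)) :
    inner ℂ φ (tens v j) = inner ℂ (WithLp.toLp 2 fun a => φ (a, j)) v := by
  fin_cases j <;>
    simp [tens, PiLp.inner_apply, Fintype.sum_prod_type]

theorem inner_partial (ρ : Matrix (Fin 3 × Fin 2) (Fin 3 × Fin 2) ℂ)
    (v : EuclideanSpace ℂ (Fin 3)) :
    inner ℂ v (toEuclideanLin (partialTraceB ρ) v) =
      ∑ j, inner ℂ (tens v j) (toEuclideanLin ρ (tens v j)) := by
  simp [tens, PiLp.inner_apply, Fintype.sum_prod_type, toLpLin_apply, mulVec, dotProduct,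
    partialTraceB, Fin.sum_univ_succ]
  ring

theorem partial_herm (ρ : Matrix (Fin 3 × Fin 2) (Fin 3 × Fin 2) ℂ) (h : ρ.IsHermitian) :
    (partialTraceB ρ).IsHermitian := by
  ext i k
  simp only [conjTranspose_apply, partialTraceB, star_sum]
  exact Finset.sum_congr rfl fun j _ => h.apply _ _

theorem weights (ρ : Matrix (Fin 3 × Fin 2) (Fin 3 × Fin 2) ℂ) (h : ρ.IsHermitian)
    (lam : Fin 6 → ℝ) (b : OrthonormalBasis (Fin 6) ℂ (EuclideanSpace ℂ (Fin 3 × Fin 2)))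
    (hb : ∀ i, toEuclideanLin ρ (b i) = (lam i : ℂ) • b i)
    (v : EuclideanSpace ℂ (Fin 3)) (hv : ‖v‖ = 1) :
    ∃ w : Fin 6 → ℝ, (∀ i, 0 ≤ w i) ∧ (∀ i, w i ≤ 1) ∧ ∑ i, w i = 2 ∧
      inner ℂ v (toEuclideanLin (partialTraceB ρ) v) = ((∑ i, lam i * w i : ℝ) : ℂ) ∧
      ∀ i, (∀ j, inner ℂ (WithLp.toLp 2 fun a => b i (a, j)) v = 0) → w i = 0 := by
  have ho : Orthonormal ℂ (tens v) := by
    rw [orthonormal_iff_ite]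
    intro i j
    rw [inner_tens, inner_self_eq_norm_sq_to_K, hv]
    simp
  refine ⟨fun i => ∑ j, ‖inner ℂ (b i) (tens v j)‖ ^ 2, fun i => by positivity, fun i => ?_, ?_, ?_,
    fun i hi => ?_⟩
  · have := ho.sum_inner_products_le (x := b i) (s := Finset.univ)
    rw [b.orthonormal.1 i] at this
    simp_rw [norm_inner_symm (b i)]
    simpa using this
  · rw [Finset.sum_comm]
    simp_rw [b.sum_sq_norm_inner_right, ho.1]
    norm_num
  · rw [inner_partial]
    simp_rw [quad_form ρ h lam b hb]
    rw [← Complex.ofReal_sum, Finset.sum_comm]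
    simp_rw [Finset.mul_sum]
  · simp [inner_tens_left, hi]

theorem exists_perp (x y : EuclideanSpace ℂ (Fin 3)) :
    ∃ v : EuclideanSpace ℂ (Fin 3), ‖v‖ = 1 ∧ inner ℂ x v = 0 ∧ inner ℂ y v = 0 := by
  have hf : Module.finrank ℂ (Submodule.span ℂ (Set.range ![x, y])) ≤ 2 := by
    have := finrank_range_le_card (R := ℂ) ![x, y]
    rwa [Fintype.card_fin] at this
  have h2 := (Submodule.span ℂ (Set.range ![x, y])).finrank_add_finrank_orthogonal
  rw [finrank_euclideanSpace_fin] at h2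
  have h3 : 0 < Module.finrank ℂ (Submodule.span ℂ (Set.range ![x, y]))ᗮ := by omega
  have := Module.finrank_pos_iff.1 h3
  obtain ⟨⟨v, hv⟩, hne⟩ := exists_ne (0 : (Submodule.span ℂ (Set.range ![x, y]))ᗮ)
  have hne' : v ≠ 0 := fun hh => hne (Subtype.ext hh)
  rw [Submodule.mem_orthogonal] at hv
  refine ⟨((‖v‖⁻¹ : ℝ) : ℂ) • v, ?_, ?_, ?_⟩
  · rw [norm_smul]
    simp [hne']
  · rw [inner_smul_right, hv x (Submodule.subset_span ⟨0, rfl⟩), mul_zero]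
  · rw [inner_smul_right, hv y (Submodule.subset_span ⟨1, rfl⟩), mul_zero]

theorem trace_of_spectrum {n : Type*} [Fintype n] [DecidableEq n] {N : ℕ} (M : Matrix n n ℂ)
    (lam : Fin N → ℝ) (h : HasSpectrum M lam) : M.trace = ((∑ i, lam i : ℝ) : ℂ) := by
  rw [Matrix.trace_eq_sum_roots_charpoly, h,
    Polynomial.roots_prod _ _ (Finset.prod_ne_zero_iff.2 fun i _ => X_sub_C_ne_zero _)]
  simp only [roots_X_sub_C, Multiset.bind_singleton, Complex.ofReal_sum]
  rfl

theorem necessity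
    (lam : Fin 6 → ℝ) (hlam : Antitone lam)
    (tlam : Fin 3 → ℝ) (htlam : Antitone tlam)
    (ρ : Matrix (Fin 3 × Fin 2) (Fin 3 × Fin 2) ℂ)
    (h : ρ.IsHermitian) (h1 : HasSpectrum ρ lam) (h2 : HasSpectrum (partialTraceB ρ) tlam) :
      (tlam 0 + tlam 1 + tlam 2 = lam 0 + lam 1 + lam 2 + lam 3 + lam 4 + lam 5 ∧
        tlam 0 ≤ lam 0 + lam 1 ∧
        lam 4 + lam 5 ≤ tlam 2 ∧
        tlam 2 ≤ lam 1 + lam 2 ∧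
        lam 3 + lam 4 ≤ tlam 0) := by
  obtain ⟨b, hb⟩ := exists_basis ρ h lam h1
  obtain ⟨c, hc⟩ := exists_basis _ (partial_herm ρ h) tlam h2
  have l01 : lam 1 ≤ lam 0 := hlam (by decide)
  have l12 : lam 2 ≤ lam 1 := hlam (by decide)
  have l23 : lam 3 ≤ lam 2 := hlam (by decide)
  have l34 : lam 4 ≤ lam 3 := hlam (by decide)
  have l45 : lam 5 ≤ lam 4 := hlam (by decide)
  have t01 : tlam 1 ≤ tlam 0 := htlam (by decide)
  have t12 : tlam 2 ≤ tlam 1 := htlam (by decide)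
  have key : ∀ i, inner ℂ (c i) (toEuclideanLin (partialTraceB ρ) (c i)) = ((tlam i : ℝ) : ℂ) := by
    intro i
    rw [hc, inner_smul_right, inner_self_eq_norm_sq_to_K, c.orthonormal.1 i]
    simp
  have bds : ∀ v : EuclideanSpace ℂ (Fin 3), ‖v‖ = 1 → ∀ r : ℝ,
      inner ℂ v (toEuclideanLin (partialTraceB ρ) v) = (r : ℂ) → tlam 2 ≤ r ∧ r ≤ tlam 0 := by
    intro v hv r hr
    rw [quad_form _ (partial_herm ρ h) tlam c hc, Complex.ofReal_inj] at hr
    have hs := c.sum_sq_norm_inner_right v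
    rw [hv] at hs
    simp only [Fin.sum_univ_succ, Fin.sum_univ_zero] at hs hr
    simp at hs hr
    have p0 := sq_nonneg ‖inner ℂ (c 0) v‖
    have p1 := sq_nonneg ‖inner ℂ (c 1) v‖
    have p2 := sq_nonneg ‖inner ℂ (c 2) v‖
    generalize ‖inner ℂ (c 0) v‖ ^ 2 = a0 at *
    generalize ‖inner ℂ (c 1) v‖ ^ 2 = a1 at *
    generalize ‖inner ℂ (c 2) v‖ ^ 2 = a2 at *
    obtain rfl : a0 = 1 - a1 - a2 := by linarith
    constructor <;> nlinarith
  refine ⟨?_, ?_, ?_, ?_, ?_⟩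
  · have e1 := trace_of_spectrum _ _ h1
    have e2 := trace_of_spectrum _ _ h2
    have e3 : (partialTraceB ρ).trace = ρ.trace := by
      simp [Matrix.trace, partialTraceB, Fintype.sum_prod_type]
    rw [e3, e1, Complex.ofReal_inj] at e2
    rw [Fin.sum_univ_six, Fin.sum_univ_three] at e2
    linarith
  · obtain ⟨w, w0, w1, ws, wq, -⟩ := weights ρ h lam b hb (c 0) (c.orthonormal.1 0)
    rw [key, Complex.ofReal_inj] at wq
    rw [Fin.sum_univ_six] at ws wq
    have wm := congrArg (fun t => lam 1 * t) ws
    ring_nf at wm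
    nlinarith [mul_nonneg (sub_nonneg.2 l01) (sub_nonneg.2 (w1 0)),
      mul_nonneg (sub_nonneg.2 l12) (w0 2),
      mul_nonneg (sub_nonneg.2 (l23.trans l12)) (w0 3),
      mul_nonneg (sub_nonneg.2 ((l34.trans l23).trans l12)) (w0 4),
      mul_nonneg (sub_nonneg.2 (((l45.trans l34).trans l23).trans l12)) (w0 5)]
  · obtain ⟨w, w0, w1, ws, wq, -⟩ := weights ρ h lam b hb (c 2) (c.orthonormal.1 2)
    rw [key, Complex.ofReal_inj] at wq
    rw [Fin.sum_univ_six] at ws wq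
    have wm := congrArg (fun t => lam 4 * t) ws
    ring_nf at wm
    nlinarith [mul_nonneg (sub_nonneg.2 l45) (sub_nonneg.2 (w1 5)),
      mul_nonneg (sub_nonneg.2 l34) (w0 3),
      mul_nonneg (sub_nonneg.2 (l34.trans l23)) (w0 2),
      mul_nonneg (sub_nonneg.2 ((l34.trans l23).trans l12)) (w0 1),
      mul_nonneg (sub_nonneg.2 (((l34.trans l23).trans l12).trans l01)) (w0 0)]
  · obtain ⟨v, hv, hx, hy⟩ := exists_perp (WithLp.toLp 2 fun a => b 0 (a, 0))
      (WithLp.toLp 2 fun a => b 0 (a, 1))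
    obtain ⟨w, w0, w1, ws, wq, wz⟩ := weights ρ h lam b hb v hv
    have z := wz 0 (fun j => by fin_cases j; exacts [hx, hy])
    refine (bds v hv _ wq).1.trans ?_
    rw [Fin.sum_univ_six] at ws ⊢
    rw [z] at ws ⊢
    have wm := congrArg (fun t => lam 2 * t) ws
    ring_nf at wm
    nlinarith [mul_nonneg (sub_nonneg.2 l12) (sub_nonneg.2 (w1 1)),
      mul_nonneg (sub_nonneg.2 l23) (w0 3),
      mul_nonneg (sub_nonneg.2 (l34.trans l23)) (w0 4),
      mul_nonneg (sub_nonneg.2 ((l45.trans l34).trans l23)) (w0 5)]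
  · obtain ⟨v, hv, hx, hy⟩ := exists_perp (WithLp.toLp 2 fun a => b 5 (a, 0))
      (WithLp.toLp 2 fun a => b 5 (a, 1))
    obtain ⟨w, w0, w1, ws, wq, wz⟩ := weights ρ h lam b hb v hv
    have z := wz 5 (fun j => by fin_cases j; exacts [hx, hy])
    refine le_trans ?_ (bds v hv _ wq).2
    rw [Fin.sum_univ_six] at ws ⊢
    rw [z] at ws ⊢
    have wm := congrArg (fun t => lam 3 * t) ws
    ring_nf at wm
    nlinarith [mul_nonneg (sub_nonneg.2 l34) (sub_nonneg.2 (w1 4)),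
      mul_nonneg (sub_nonneg.2 l23) (w0 2),
      mul_nonneg (sub_nonneg.2 (l23.trans l12)) (w0 1),
      mul_nonneg (sub_nonneg.2 ((l23.trans l12).trans l01)) (w0 0)]

/-- Real symmetric 2x2 block with eigenvalues `p, q` and upper left entry `x`. -/
noncomputable def blk (p q x : ℝ) : Matrix (Fin 2) (Fin 2) ℂ :=
  !![(x : ℂ), (√((p - x) * (x - q)) : ℂ); (√((p - x) * (x - q)) : ℂ), ((p + q - x : ℝ) : ℂ)]

theorem blk_charpoly (p q x : ℝ) (h1 : x ≤ p) (h2 : q ≤ x) :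
    (blk p q x).charpoly = (X - C (p : ℂ)) * (X - C (q : ℂ)) := by
  have hs : (√((p - x) * (x - q)) : ℂ) * (√((p - x) * (x - q)) : ℂ) = (p - x) * (x - q) := by
    rw [← Complex.ofReal_mul, Real.mul_self_sqrt (mul_nonneg (by linarith) (by linarith))]
    push_cast
    ring
  rw [charpoly_fin_two]
  have ht : (blk p q x).trace = p + q := by
    simp [blk, Matrix.trace_fin_two]
  have hd : (blk p q x).det = p * q := by
    rw [blk, Matrix.det_fin_two_of, hs]
    push_cast
    ring
  rw [ht, hd]
  simp only [map_add, map_mul]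
  ring

theorem charpoly_blockDiag (M : Fin 3 → Matrix (Fin 2) (Fin 2) ℂ) :
    (blockDiagonal M).charpoly = ∏ k, (M k).charpoly := by
  have : (blockDiagonal M).charmatrix = blockDiagonal fun k => (M k).charmatrix := by
    ext ⟨i, k⟩ ⟨j, l⟩
    simp only [charmatrix_apply, blockDiagonal_apply, diagonal_apply, Prod.mk.injEq]
    by_cases hk : k = l <;> simp [hk]
  rw [Matrix.charpoly, this, det_blockDiagonal]
  rfl

/-- Which entries belong to which block. -/
def layout : Fin 2 × Fin 3 ≃ Fin 3 × Fin 2 where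
  toFun p := (![![0, 2, 1], ![1, 0, 2]] p.1 p.2, p.1)
  invFun p := (p.2, ![![0, 2, 1], ![1, 0, 2]] p.2 p.1)
  left_inv := by decide
  right_inv := by decide

theorem sufficiency
    (lam : Fin 6 → ℝ) (hlam : Antitone lam)
    (tlam : Fin 3 → ℝ) (htlam : Antitone tlam)
    (hS : tlam 0 + tlam 1 + tlam 2 = lam 0 + lam 1 + lam 2 + lam 3 + lam 4 + lam 5)
    (h1 : tlam 0 ≤ lam 0 + lam 1) (h2 : lam 4 + lam 5 ≤ tlam 2)
    (h3 : tlam 2 ≤ lam 1 + lam 2) (h4 : lam 3 + lam 4 ≤ tlam 0) :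
    ∃ ρAB : Matrix (Fin 3 × Fin 2) (Fin 3 × Fin 2) ℂ,
        ρAB.IsHermitian ∧ HasSpectrum ρAB lam ∧ HasSpectrum (partialTraceB ρAB) tlam := by
  have l01 : lam 1 ≤ lam 0 := hlam (by decide)
  have l12 : lam 2 ≤ lam 1 := hlam (by decide)
  have l23 : lam 3 ≤ lam 2 := hlam (by decide)
  have l34 : lam 4 ≤ lam 3 := hlam (by decide)
  have l45 : lam 5 ≤ lam 4 := hlam (by decide)
  have t01 : tlam 1 ≤ tlam 0 := htlam (by decide)
  have t12 : tlam 2 ≤ tlam 1 := htlam (by decide)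
  obtain ⟨x, a1, a2, a3, b1, b2, b3⟩ : ∃ x : ℝ, lam 3 ≤ x ∧ tlam 0 - lam 1 ≤ x ∧
      lam 5 + lam 0 + lam 3 - tlam 1 ≤ x ∧ x ≤ lam 0 ∧ x ≤ tlam 0 - lam 4 ∧
      x ≤ lam 2 + lam 0 + lam 3 - tlam 1 := by
    refine ⟨max (lam 3) (max (tlam 0 - lam 1) (lam 5 + lam 0 + lam 3 - tlam 1)),
      le_max_left _ _, (le_max_left _ _).trans (le_max_right _ _),
      (le_max_right _ _).trans (le_max_right _ _), ?_, ?_, ?_⟩ <;>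
    refine max_le ?_ (max_le ?_ ?_) <;> linarith
  let M : Fin 3 → Matrix (Fin 2) (Fin 2) ℂ :=
    ![blk (lam 0) (lam 3) x, blk (lam 1) (lam 4) (lam 1 + lam 4 - (tlam 0 - x)),
      blk (lam 2) (lam 5) (tlam 1 - lam 0 - lam 3 + x)]
  refine ⟨reindex layout layout (blockDiagonal M), ?_, ?_, ?_⟩
  · have hM : ∀ k, (M k).IsHermitian := by
      intro k
      ext i j
      fin_cases k <;> fin_cases i <;> fin_cases j <;> simp [M, blk]
    have : (blockDiagonal M).IsHermitian := by
      rw [Matrix.IsHermitian, blockDiagonal_conjTranspose]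
      congr 1
      funext k
      exact hM k
    exact this.submatrix _
  · rw [HasSpectrum, charpoly_reindex, charpoly_blockDiag, Fin.prod_univ_three, Fin.prod_univ_six]
    simp only [M, Matrix.cons_val]
    rw [blk_charpoly _ _ _ b1 a1, blk_charpoly _ _ _ (by linarith) (by linarith),
      blk_charpoly _ _ _ (by linarith) (by linarith)]
    ring
  · have : partialTraceB (reindex layout layout (blockDiagonal M)) =
        diagonal fun i => (tlam i : ℂ) := by
      have hS' : (tlam 2 : ℂ) = lam 0 + lam 1 + lam 2 + lam 3 + lam 4 + lam 5
          - tlam 0 - tlam 1 := by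
        have : tlam 2 = lam 0 + lam 1 + lam 2 + lam 3 + lam 4 + lam 5
          - tlam 0 - tlam 1 := by linarith
        rw [this]
        push_cast
        ring
      ext i j
      fin_cases i <;> fin_cases j <;>
        simp [partialTraceB, layout, blockDiagonal_apply, M, blk, hS'] <;> ring
    rw [HasSpectrum, this, charpoly_diagonal]

/-- The complete solution of the partial trace problem for `d_A = 3`, `d_B = 2`:
nonincreasing `λ ∈ ℝ⁶` and `λ̃ ∈ ℝ³` arise as the spectra of a Hermitian `ρ_{AB}` on
`ℂ³ ⊗ ℂ²` and of its partial trace `ρ_A` iff the trace condition and the four listed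
inequalities hold. -/
theorem dim3x2_characterization
    (lam : Fin 6 → ℝ) (hlam : Antitone lam)
    (tlam : Fin 3 → ℝ) (htlam : Antitone tlam) :
    (∃ ρAB : Matrix (Fin 3 × Fin 2) (Fin 3 × Fin 2) ℂ,
        ρAB.IsHermitian ∧ HasSpectrum ρAB lam ∧ HasSpectrum (partialTraceB ρAB) tlam) ↔
      (tlam 0 + tlam 1 + tlam 2 = lam 0 + lam 1 + lam 2 + lam 3 + lam 4 + lam 5 ∧
        tlam 0 ≤ lam 0 + lam 1 ∧
        lam 4 + lam 5 ≤ tlam 2 ∧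
        tlam 2 ≤ lam 1 + lam 2 ∧
        lam 3 + lam 4 ≤ tlam 0) := by
  constructor
  · rintro ⟨ρ, h, h1, h2⟩
    exact necessity lam hlam tlam htlam ρ h h1 h2
  · rintro ⟨hS, h1, h2, h3, h4⟩
    exact sufficiency lam hlam tlam htlam hS h1 h2 h3 h4
end

section
/- Let $d_A, d_B$ be positive integers with $d_B \geq \tfrac{1}{2} d_A^2$. Let $\lambda \in \mathbb{R}^{d_A d_B}$ and $\tilde{\lambda} \in \mathbb{R}^{d_A}$ be nonincreasing vectors satisfying the basic inequalities $\sum_{i=1}^{k} \tilde{\lambda}_i \leq \sum_{i=1}^{d_B k} \lambda_i$ for all $k \in \{1, \ldots, d_A - 1\}$ and the trace condition $\sum_{i=1}^{d_A} \tilde{\lambda}_i = \sum_{i=1}^{d_A d_B} \lambda_i$. Then there exists a Hermitian matrix $\rho_{AB}$ on $\mathbb{C}^{d_A} \otimes \mathbb{C}^{d_B}$ with spectrum $\lambda$ whose partial trace $\rho_A = \mathrm{Tr}_B(\rho_{AB})$ has spectrum $\tilde{\lambda}$; that is, when $d_B \geq \tfrac{1}{2} d_A^2$ the basic inequalities are sufficient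 to characterize the relationship between the spectrum of $\rho_{AB}$ and the spectrum of $\rho_A$. -/
open Matrix Polynomial

/-- Partial sum of the first `k` entries of a vector indexed by `Fin N`. -/
noncomputable def psum {N : ℕ} (v : Fin N → ℝ) (k : ℕ) : ℝ :=
  ∑ i ∈ Finset.univ.filter (fun i : Fin N => (i : ℕ) < k), v i

/-- The vector obtained from `y` by moving mass `δ` from `j` to `k`. -/
noncomputable def moveMass {n : ℕ} (y : Fin n → ℝ) (j k : Fin n) (δ : ℝ) : Fin n → ℝ :=
  fun i => if i = j then y j - δ else if i = k then y k + δ else y i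

/-- Hardy-Littlewood-Polya: a property closed under transfers passes from `y` to any
majorized nonincreasing `x`. -/
theorem hlp {n : ℕ} (P : (Fin n → ℝ) → Prop)
    (hP : ∀ y j k δ, j ≠ k → 0 ≤ δ → δ ≤ y j - y k → P y → P (moveMass y j k δ))
    (x : Fin n → ℝ) (hx : Antitone x) (N : ℕ) :
    ∀ y : Fin n → ℝ, (Finset.univ.filter (fun i => x i ≠ y i)).card ≤ N →
      (∀ r, psum x r ≤ psum y r) → psum x n = psum y n → P y → P x := by
  have hsplit : ∀ (y : Fin n → ℝ) r, psum y r = ∑ i : Fin n, if (i : ℕ) < r then y i else 0 := by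
    intro y r
    rw [psum, Finset.sum_filter]
  induction N with
  | zero =>
    intro y hc _ _ hy
    have : x = y := by
      funext i
      by_contra h
      have : i ∈ Finset.univ.filter (fun i => x i ≠ y i) := by simpa using h
      have := Finset.card_pos.mpr ⟨i, this⟩
      omega
    rwa [this]
  | succ N ih =>
    intro y hc hmaj htot hy
    by_cases hxy : ∀ i, x i ≤ y i
    · have hs : ∑ i, x i = ∑ i, y i := by
        have := htot
        simpa [hsplit] using this
      have := (Finset.sum_eq_sum_iff_of_le (fun i _ => hxy i)).mp hs
      have : x = y := funext fun i => this i (Finset.mem_univ _)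
      rwa [this]
    · push Not at hxy
      -- minimal k
      obtain ⟨k, hk, hkmin⟩ : ∃ k, y k < x k ∧ ∀ i, i < k → x i ≤ y i := by
        have hne : (Finset.univ.filter (fun i => y i < x i)).Nonempty := by
          obtain ⟨i, hi⟩ := hxy
          exact ⟨i, by simpa using hi⟩
        refine ⟨Finset.min' _ hne, ?_, ?_⟩
        · simpa using Finset.min'_mem _ hne
        · intro i hi
          by_contra h
          have := Finset.min'_le _ i (show i ∈ Finset.univ.filter (fun i => y i < x i) by
            simpa using h)
          exact absurd hi (not_lt.mpr this)
      obtain ⟨j, hjk, hj⟩ : ∃ j, j < k ∧ x j < y j := by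
        by_contra hcon
        push Not at hcon
        have h1 := hmaj (k + 1)
        rw [hsplit, hsplit] at h1
        have : ∑ i : Fin n, (if (i : ℕ) < k + 1 then y i else 0)
            < ∑ i : Fin n, (if (i : ℕ) < k + 1 then x i else 0) := by
          apply Finset.sum_lt_sum
          · intro i _
            split_ifs with h
            · rcases Nat.lt_succ_iff_lt_or_eq.mp h with h | h
              · exact hcon i h
              · rw [Fin.ext h]; exact hk.le
            · exact le_rfl
          · exact ⟨k, Finset.mem_univ _, by simpa using hk⟩
        linarith
      set δ := min (y j - x j) (x k - y k) with hδ
      have hδ0 : 0 < δ := lt_min (by linarith) (by linarith)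
      have hδ1 : δ ≤ y j - x j := min_le_left _ _
      have hδ2 : δ ≤ x k - y k := min_le_right _ _
      have hxx := hx hjk.le
      have hne : j ≠ k := hjk.ne
      have hmm : ∀ r, psum (moveMass y j k δ) r = psum y r
          - (if (j : ℕ) < r then δ else 0) + (if (k : ℕ) < r then δ else 0) := by
        intro r
        rw [hsplit, hsplit]
        have e1 : (if (j : ℕ) < r then δ else 0)
            = ∑ i : Fin n, if i = j then (if (i : ℕ) < r then δ else 0) else 0 := by simp
        have e2 : (if (k : ℕ) < r then δ else 0)
            = ∑ i : Fin n, if i = k then (if (i : ℕ) < r then δ else 0) else 0 := by simp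
        rw [e1, e2, ← Finset.sum_sub_distrib, ← Finset.sum_add_distrib]
        apply Finset.sum_congr rfl
        intro i _
        unfold moveMass
        by_cases h1 : i = j
        · subst h1
          simp only [if_true, if_neg hne]
          split_ifs <;> ring
        · by_cases h2 : i = k
          · subst h2
            simp only [if_true, if_neg h1]
            split_ifs <;> ring
          · simp [h1, h2]
      refine ih (moveMass y j k δ) ?_ ?_ ?_ (hP y j k δ hne hδ0.le (by linarith) hy)
      · have hss : (Finset.univ.filter (fun i => x i ≠ moveMass y j k δ i)) ⊂
            (Finset.univ.filter (fun i => x i ≠ y i)) := by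
          rw [Finset.ssubset_iff_of_subset]
          · rcases le_total (y j - x j) (x k - y k) with h | h
            · refine ⟨j, by simpa using hj.ne, ?_⟩
              rw [min_eq_left h] at hδ
              simp [moveMass, hδ]
            · refine ⟨k, by simpa using hk.ne', ?_⟩
              rw [min_eq_right h] at hδ
              simp [moveMass, hδ, hne.symm]
          · intro i
            simp only [Finset.mem_filter, Finset.mem_univ, true_and]
            by_cases h1 : i = j
            · subst h1; intro _; exact hj.ne
            · by_cases h2 : i = k
              · subst h2; intro _; exact hk.ne'
              · simp [moveMass, h1, h2]
        have := Finset.card_lt_card hss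
        omega
      · intro r
        by_cases hr : (k : ℕ) < r
        · have hjr : (j : ℕ) < r := lt_trans hjk hr
          have := hmaj r
          rw [hmm, if_pos hr, if_pos hjr]
          linarith
        · rw [hsplit, hsplit]
          apply Finset.sum_le_sum
          intro i _
          split_ifs with h
          · have hik : i < k := by
              have : (i : ℕ) < k := by omega
              exact this
            unfold moveMass
            by_cases h1 : i = j
            · subst h1; rw [if_pos rfl]; linarith
            · rw [if_neg h1, if_neg hik.ne]; exact hkmin i hik
          · exact le_rfl
      · rw [hmm, if_pos j.2, if_pos k.2, htot]; ring

/-- Schur-Horn realizability: `y` is the diagonal of a unitary conjugate of `diag μ`. -/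
def Realizable {n : ℕ} (μ y : Fin n → ℝ) : Prop :=
  ∃ U : Fin n → Fin n → ℂ, (∀ i i', U i ⬝ᵥ star (U i') = if i = i' then 1 else 0) ∧
    ∀ i, ∑ l, U i l * star (U i l) * (μ l : ℂ) = (y i : ℂ)

theorem realizable_move {n : ℕ} (μ y : Fin n → ℝ) (j k : Fin n) (δ : ℝ) (hjk : j ≠ k)
    (h0 : 0 ≤ δ) (h1 : δ ≤ y j - y k) (h : Realizable μ y) :
    Realizable μ (moveMass y j k δ) := by
  rcases eq_or_lt_of_le (h0.trans h1) with hz | hz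
  · have : δ = 0 := by linarith
    have : moveMass y j k δ = y := by
      funext i; unfold moveMass; rw [this]; split_ifs with h2 h3
      · rw [h2, sub_zero]
      · rw [h3, add_zero]
      · rfl
    rwa [this]
  obtain ⟨U, hU, hd⟩ := h
  set a : ℂ := ∑ l, U j l * star (U k l) * (μ l : ℂ) with ha
  have ha' : ∑ l, U k l * star (U j l) * (μ l : ℂ) = star a := by
    rw [ha, star_sum]
    apply Finset.sum_congr rfl
    intro l _
    simp only [star_mul', star_star, Complex.star_def, Complex.conj_ofReal, Complex.conj_conj]
    ring
  obtain ⟨w, hw, hwa⟩ : ∃ w : ℂ, w * star w = 1 ∧ star w * a + w * star a = 0 := by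
    by_cases ha0 : a = 0
    · exact ⟨1, by simp, by simp [ha0]⟩
    · have hn : ((‖a‖ : ℝ) : ℂ) ≠ 0 := by simpa using ha0
      have hq : a * star a = (‖a‖ : ℂ) ^ 2 := by
        simpa using Complex.mul_conj' a
      refine ⟨Complex.I * a / ‖a‖, ?_, ?_⟩
      · simp only [star_div₀, star_mul', Complex.star_def, Complex.conj_I, Complex.conj_ofReal] at hq ⊢
        field_simp
        linear_combination (-Complex.I^2) * hq - (‖a‖:ℂ)^2 * Complex.I_sq
      · simp only [star_div₀, star_mul', Complex.star_def, Complex.conj_I, Complex.conj_ofReal]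
        field_simp
        ring
  set t : ℝ := δ / (y j - y k) with ht
  have ht0 : 0 ≤ t := div_nonneg h0 hz.le
  have ht1 : t ≤ 1 := (div_le_one hz).mpr h1
  have htδ : t * (y j - y k) = δ := div_mul_cancel₀ _ hz.ne'
  obtain ⟨s, hs⟩ : ∃ s : ℝ, s * s = t := ⟨√t, Real.mul_self_sqrt ht0⟩
  obtain ⟨c, hc⟩ : ∃ c : ℝ, c * c = 1 - t := ⟨√(1 - t), Real.mul_self_sqrt (by linarith)⟩
  have hsC : (s : ℂ) * s = t := by exact_mod_cast hs
  have hcC : (c : ℂ) * c = 1 - t := by exact_mod_cast hc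
  have htC : (t : ℂ) * (y j - y k) = δ := by exact_mod_cast htδ
  clear_value t a
  set V : Fin n → Fin n → ℂ := fun i =>
    if i = j then (c : ℂ) • U j + ((s : ℂ) * w) • U k
    else if i = k then (-(s : ℂ)) • U j + ((c : ℂ) * w) • U k else U i with hV
  have Vj : V j = (c : ℂ) • U j + ((s : ℂ) * w) • U k := by simp [hV]
  have Vk : V k = (-(s : ℂ)) • U j + ((c : ℂ) * w) • U k := by simp [hV, hjk.symm]
  have Vo : ∀ i, i ≠ j → i ≠ k → V i = U i := by intro i h1 h2; simp [hV, h1, h2]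
  clear_value V
  refine ⟨V, ?_, ?_⟩
  · intro i i'
    have sc : star (c : ℂ) = c := Complex.conj_ofReal c
    have ss : star (s : ℂ) = s := Complex.conj_ofReal s
    have ex : ∀ (p q p' q' : ℂ),
        (p • U j + q • U k) ⬝ᵥ star (p' • U j + q' • U k) = p * star p' + q * star q' := by
      intro p q p' q'
      simp only [star_add, star_smul, add_dotProduct, dotProduct_add, smul_dotProduct,
        dotProduct_smul, hU, if_true, if_neg hjk, if_neg hjk.symm, smul_eq_mul]
      ring
    have exo : ∀ (p q : ℂ) i, i ≠ j → i ≠ k → (p • U j + q • U k) ⬝ᵥ star (U i) = 0 := by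
      intro p q i h1 h2
      simp [add_dotProduct, smul_dotProduct, hU, h1.symm, h2.symm]
    have eox : ∀ (p q : ℂ) i, i ≠ j → i ≠ k → U i ⬝ᵥ star (p • U j + q • U k) = 0 := by
      intro p q i h1 h2
      simp [star_add, star_smul, dotProduct_add, dotProduct_smul, hU, h1, h2]
    by_cases a1 : i = j
    · by_cases b1 : i' = j
      · subst a1; subst b1
        rw [Vj, ex, if_pos rfl, star_mul', sc, ss]
        linear_combination hcC + hsC + (s : ℂ) * s * hw
      · by_cases b2 : i' = k
        · subst a1; subst b2
          rw [Vj, Vk, ex, if_neg hjk, star_mul', star_neg, sc, ss]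
          linear_combination (s : ℂ) * c * hw
        · subst a1
          rw [Vj, Vo i' b1 b2, exo _ _ _ b1 b2, if_neg (Ne.symm b1)]
    · by_cases a2 : i = k
      · by_cases b1 : i' = j
        · subst a2; subst b1
          rw [Vj, Vk, ex, if_neg hjk.symm, star_mul', sc, ss]
          linear_combination (s : ℂ) * c * hw
        · by_cases b2 : i' = k
          · subst a2; subst b2
            rw [Vk, ex, if_pos rfl, star_mul', star_neg, sc, ss]
            linear_combination hcC + hsC + (c : ℂ) * c * hw
          · subst a2
            rw [Vk, Vo i' b1 b2, exo _ _ _ b1 b2, if_neg (Ne.symm b2)]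
      · rw [Vo i a1 a2]
        by_cases b1 : i' = j
        · subst b1
          rw [Vj, eox _ _ _ a1 a2, if_neg a1]
        · by_cases b2 : i' = k
          · subst b2
            rw [Vk, eox _ _ _ a1 a2, if_neg a2]
          · rw [Vo i' b1 b2, hU]
  · have sc : star (c : ℂ) = c := Complex.conj_ofReal c
    have ss : star (s : ℂ) = s := Complex.conj_ofReal s
    have ex : ∀ p q : ℂ, ∑ l, (p • U j + q • U k) l * star ((p • U j + q • U k) l) * (μ l : ℂ)
        = p * star p * y j + q * star q * y k + p * star q * a + q * star p * star a := by
      intro p q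
      rw [← hd j, ← hd k, ← ha', ha]
      simp only [Finset.mul_sum, ← Finset.sum_add_distrib]
      apply Finset.sum_congr rfl
      intro l _
      simp only [Pi.add_apply, Pi.smul_apply, smul_eq_mul, star_add, star_mul']
      ring
    intro i
    by_cases a1 : i = j
    · subst a1
      rw [Vj, ex, star_mul', sc, ss]
      simp only [moveMass, if_true]
      push_cast
      linear_combination (y i : ℂ) * hcC + (y k : ℂ) * hsC + (s : ℂ) * s * y k * hw
        + (s : ℂ) * c * hwa - htC
    · by_cases a2 : i = k
      · subst a2
        rw [Vk, ex, star_mul', star_neg, sc, ss]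
        simp only [moveMass, if_true, if_neg a1]
        push_cast
        linear_combination (y j : ℂ) * hsC + (y i : ℂ) * hcC + (c : ℂ) * c * y i * hw
          - (s : ℂ) * c * hwa + htC
      · rw [Vo i a1 a2, hd]
        simp [moveMass, a1, a2]

/-- In the large message limit `d_B ≥ d_A²/2`, the basic inequalities (with the trace
condition) are sufficient: any nonincreasing `λ, λ̃` satisfying them are the spectra of
some Hermitian `ρ_{AB}` and its partial trace `ρ_A`. -/
theorem basic_inequalities_sufficient_large_dB {dA dB : ℕ}
    (hdA : 0 < dA) (hdB : 0 < dB) (hbig : dA ^ 2 ≤ 2 * dB)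
    (lam : Fin (dA * dB) → ℝ) (hlam : Antitone lam)
    (tlam : Fin dA → ℝ) (htlam : Antitone tlam)
    (hbasic : ∀ k : ℕ, 1 ≤ k → k ≤ dA - 1 → psum tlam k ≤ psum lam (dB * k))
    (htrace : psum tlam dA = psum lam (dA * dB)) :
    ∃ ρAB : Matrix (Fin dA × Fin dB) (Fin dA × Fin dB) ℂ,
      ρAB.IsHermitian ∧ HasSpectrum ρAB lam ∧ HasSpectrum (partialTraceB ρAB) tlam := by
  have hle : dA ≤ dB := by
    rcases Nat.lt_or_ge dA 2 with h | h
    · omega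
    · nlinarith
  have : NeZero dB := ⟨hdB.ne'⟩
  set μ : Fin dA → ℝ := fun k => ∑ j : Fin dB, lam (finProdFinEquiv (k, j)) with hμ
  have hpsμ : ∀ r, psum μ r = psum lam (dB * r) := by
    intro r
    rw [psum, psum, Finset.sum_filter, Finset.sum_filter,
      ← Equiv.sum_comp finProdFinEquiv, Fintype.sum_prod_type]
    apply Finset.sum_congr rfl
    intro k _
    have hiff : ∀ j : Fin dB, ((finProdFinEquiv (k, j) : Fin (dA * dB)) : ℕ) < dB * r
        ↔ (k : ℕ) < r := by
      intro j
      simp only [finProdFinEquiv_apply_val]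
      have hj := j.2
      constructor
      · intro h
        by_contra hc
        have := Nat.mul_le_mul_left dB (not_lt.mp hc)
        omega
      · intro h
        have := Nat.mul_le_mul_left dB (Nat.succ_le_of_lt h)
        rw [Nat.mul_succ] at this
        omega
    simp only [hiff]
    split_ifs <;> simp [hμ]
  have hsat : ∀ (v : Fin dA → ℝ) r, dA ≤ r → psum v r = psum v dA := by
    intro v r hr
    unfold psum
    congr 1
    ext i
    have := i.2
    simp
    omega
  have htot : psum tlam dA = psum μ dA := by rw [hpsμ, htrace]; exact congrArg (psum lam) (Nat.mul_comm _ _)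
  have hmaj : ∀ r, psum tlam r ≤ psum μ r := by
    intro r
    rcases Nat.lt_or_ge r dA with h | h
    · rcases Nat.eq_zero_or_pos r with h0 | h0
      · subst h0; simp [psum]
      · rw [hpsμ]; exact hbasic r h0 (by omega)
    · rw [hsat _ r h, hsat _ r h, htot]
  have hreal : Realizable μ tlam := by
    refine hlp (Realizable μ) (fun y j k δ => realizable_move μ y j k δ) tlam htlam _ μ le_rfl
      hmaj htot ?_
    refine ⟨fun i l => if i = l then 1 else 0, ?_, ?_⟩
    · intro i i'
      simp [dotProduct, eq_comm]
    · intro i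
      simp
  obtain ⟨U, hU, hd⟩ := hreal
  let s : Fin dA → Fin dB := Fin.castLE hle
  have hs : ∀ i i', s i = s i' ↔ i = i' := fun i i' => (Fin.castLE_injective hle).eq_iff
  clear_value s
  let W : Matrix (Fin dA × Fin dB) (Fin dA × Fin dB) ℂ := Matrix.of fun p q =>
    if p.2 = q.2 + s p.1 then U p.1 q.1 else 0
  have hW : ∀ p q, W p q = if p.2 = q.2 + s p.1 then U p.1 q.1 else 0 := fun p q => rfl
  clear_value W
  let L : Fin dA × Fin dB → ℂ := fun q => (lam (finProdFinEquiv q) : ℂ)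
  have hWW : W * Wᴴ = 1 := by
    ext ⟨i, b⟩ ⟨i', b'⟩
    simp only [Matrix.mul_apply, conjTranspose_apply, hW, Fintype.sum_prod_type_right]
    have h1 : ∀ j : Fin dB, ∑ k, (if b = j + s i then U i k else 0) *
        star (if b' = j + s i' then U i' k else 0)
        = if b = j + s i ∧ b' = j + s i' then (if i = i' then 1 else 0) else 0 := by
      intro j
      rw [← hU i i', dotProduct]
      by_cases h1 : b = j + s i <;> by_cases h2 : b' = j + s i' <;> simp [h1, h2]
    simp only [h1]
    by_cases hi : i = i'
    · subst hi
      have h2 : ∀ j : Fin dB, (b = j + s i ∧ b' = j + s i) ↔ (j = b - s i ∧ b = b') := by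
        intro j
        constructor
        · rintro ⟨h, h'⟩
          exact ⟨by rw [h, add_sub_cancel_right], h.trans h'.symm⟩
        · rintro ⟨h, h'⟩
          subst h'; subst h
          simp
      simp only [h2, if_true]
      by_cases hb : b = b'
      · subst hb; simp
      · simp [hb]
    · simp [hi, Matrix.one_apply]
  have hWW' : Wᴴ * W = 1 := mul_eq_one_comm.mp hWW
  refine ⟨W * diagonal L * Wᴴ, ?_, ?_, ?_⟩
  · have hL : (diagonal L).IsHermitian := by
      apply isHermitian_diagonal_of_self_adjoint
      funext q
      exact Complex.conj_ofReal _
    exact isHermitian_mul_mul_conjTranspose W hL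
  · unfold HasSpectrum
    rw [Matrix.charpoly_mul_comm, ← mul_assoc, hWW', one_mul, charpoly_diagonal]
    exact Equiv.prod_comp finProdFinEquiv (fun i => (X - C (lam i : ℂ)))
  · have hpt : partialTraceB (W * diagonal L * Wᴴ) = diagonal (fun i => (tlam i : ℂ)) := by
      ext i i'
      unfold partialTraceB
      simp only [Matrix.mul_apply (M := W * diagonal L), Matrix.mul_diagonal, conjTranspose_apply]
      rw [Finset.sum_comm]
      have h1 : ∀ q : Fin dA × Fin dB, ∑ b : Fin dB, W (i, b) q * L q * star (W (i', b) q)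
          = if i = i' then U i q.1 * star (U i q.1) * L q else 0 := by
        intro q
        simp only [hW, ite_mul, zero_mul, Finset.sum_ite_eq', Finset.sum_ite_eq, Finset.mem_univ,
          if_true]
        by_cases hi : i = i'
        · subst hi; simp; ring
        · have : ¬ s i = s i' := by rwa [hs]
          simp [hi, this]
      simp only [h1]
      by_cases hi : i = i'
      · subst hi
        simp only [if_true, diagonal_apply_eq, ← hd i, Fintype.sum_prod_type]
        apply Finset.sum_congr rfl
        intro k _
        simp [L, hμ, Finset.mul_sum]
      · simp [hi]
    unfold HasSpectrum
    rw [hpt, charpoly_diagonal]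
end
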